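/- arXiv:1008.3229 — 2 statements merged into one kernel-verified Lean document; each statement's English description precedes it below -/
import Mathlib

section
/- Under conditions (C1)–(C2) with γ > 0, for every x > 0, the quantity [ (U(tx) − U(t))/(t·U'(t)) − (x^γ − 1)/γ ] / A(t) converges, as t → ∞, to K_{γ,ρ}(x) = ∫₁^x u^{γ−1}(∫₁^u s^{ρ−1} ds) du. -/
open Filter Real

noncomputable section

/-- `K_{γ,ρ}(x) = ∫₁^x u^{γ−1} (∫₁^u s^{ρ−1} ds) du`. -/
def Kfun (γ ρ x : ℝ) : ℝ :=
  ∫ u in (1:ℝ)..x, u ^ (γ - 1) * ∫ s in (1:ℝ)..u, s ^ (ρ - 1)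

/-!
Put `V t = log |U' t| - (γ - 1) log t` (`Real.log` takes the absolute value by itself), so that
`V' t = A t / t`. The uniform convergence theorem for regularly varying functions makes
`A (t s) / A t → s ^ ρ` locally uniform in `s`; integrating in `s` gives
`(V (t s) - V t) / A t → ∫₁^s r ^ (ρ - 1)`. Since `A → 0`, exponentiating gives
`(U' (t s) / U' t - s ^ (γ - 1)) / A t → s ^ (γ - 1) ∫₁^s r ^ (ρ - 1)`, and a second integration
gives the theorem.

Local uniformity is expressed as continuous convergence, that is, convergence along the filter
`l ×ˢ 𝓝 s`: such limits compose like ordinary limits. Integration in `s` is carried out with the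
mean value inequality, which asks for no integrability of `A`.
-/

open Set MeasureTheory Topology

theorem hasDerivAt_intervalIntegral_of_continuousOn {E : Type*} [NormedAddCommGroup E]
    [NormedSpace ℝ E] [CompleteSpace E] {g : ℝ → E} {I : Set ℝ} {c x : ℝ} (hI : IsOpen I)
    (hI' : I.OrdConnected) (hg : ContinuousOn g I) (hc : c ∈ I) (hx : x ∈ I) :
    HasDerivAt (fun y => ∫ u in c..y, g u) (g x) x :=
  intervalIntegral.integral_hasDerivAt_right
    (hg.mono (hI'.uIcc_subset hc hx)).intervalIntegrable
    (hg.stronglyMeasurableAtFilter hI x hx) (hg.continuousAt (hI.mem_nhds hx))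

theorem continuousOn_rpow_const_Ioi (p : ℝ) : ContinuousOn (fun x : ℝ => x ^ p) (Ioi 0) :=
  fun x hx => (continuousAt_rpow_const x p (Or.inl (ne_of_gt hx))).continuousWithinAt

theorem exists_Icc_mem_nhds_subset {I : Set ℝ} {c x : ℝ} (hI : IsOpen I) (hI' : I.OrdConnected)
    (hc : c ∈ I) (hx : x ∈ I) : ∃ a b, c ∈ Icc a b ∧ Icc a b ∈ 𝓝 x ∧ Icc a b ⊆ I := by
  obtain ⟨δ, hδ, hball⟩ := Metric.nhds_basis_closedBall.mem_iff.1 (hI.mem_nhds hx)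
  rw [Real.closedBall_eq_Icc] at hball
  have hmin : min c (x - δ) ∈ I :=
    min_rec' (· ∈ I) hc (hball ⟨le_rfl, by linarith⟩)
  have hmax : max c (x + δ) ∈ I :=
    max_rec' (· ∈ I) hc (hball ⟨by linarith, le_rfl⟩)
  refine ⟨_, _, ⟨min_le_left _ _, le_max_left _ _⟩, Icc_mem_nhds ?_ ?_, hI'.out hmin hmax⟩
  · exact (min_le_right _ _).trans_lt (by linarith)
  · exact lt_of_lt_of_le (by linarith) (le_max_right _ _)

theorem eventually_forall_mem_of_isCompact {ι X : Type*} [TopologicalSpace X] {l : Filter ι}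
    {K : Set X} {p : ι × X → Prop} (hK : IsCompact K) (h : ∀ x ∈ K, ∀ᶠ q in l ×ˢ 𝓝 x, p q) :
    ∀ᶠ t in l, ∀ x ∈ K, p (t, x) :=
  eventually_prod_principal_iff.1 <|
    prod_mono_right l principal_le_nhdsSet (hK.mem_prod_nhdsSet_of_forall h)

section ContinuousConvergence

variable {ι E : Type*} [NormedAddCommGroup E] [NormedSpace ℝ E] {l : Filter ι} {I : Set ℝ}
  {c x : ℝ}

theorem tendsto_zero_prod_nhds_of_hasDerivAt {h h' : ι → ℝ → E} (hI : IsOpen I)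
    (hI' : I.OrdConnected) (hc : c ∈ I) (hhc : Tendsto (fun t => h t c) l (𝓝 0))
    (hh : ∀ s ∈ I, ∀ᶠ p in l ×ˢ 𝓝 s, HasDerivAt (h p.1) (h' p.1 p.2) p.2)
    (hh' : ∀ s ∈ I, Tendsto (fun p : ι × ℝ => h' p.1 p.2) (l ×ˢ 𝓝 s) (𝓝 0)) (hx : x ∈ I) :
    Tendsto (fun p : ι × ℝ => h p.1 p.2) (l ×ˢ 𝓝 x) (𝓝 0) := by
  obtain ⟨a, b, hcab, hab, hsub⟩ := exists_Icc_mem_nhds_subset hI hI' hc hx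
  have hlen : 0 ≤ b - a := sub_nonneg.2 (hcab.1.trans hcab.2)
  rw [NormedAddGroup.tendsto_nhds_zero]
  intro ε hε
  set η := ε / (b - a + 1) with hη
  have hη0 : 0 < η := by positivity
  have hderiv : ∀ᶠ t in l, ∀ s ∈ Icc a b, HasDerivAt (h t) (h' t s) s ∧ ‖h' t s‖ < η :=
    eventually_forall_mem_of_isCompact isCompact_Icc fun s hs =>
      (hh s (hsub hs)).and (NormedAddGroup.tendsto_nhds_zero.1 (hh' s (hsub hs)) η hη0)
  have hbase : ∀ᶠ t in l, ‖h t c‖ < η := NormedAddGroup.tendsto_nhds_zero.1 hhc η hη0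
  filter_upwards [(hderiv.and hbase).prod_mk hab] with ⟨t, s⟩ ⟨⟨ht, htc⟩, hs⟩
  have hmvt : ‖h t s - h t c‖ ≤ η * ‖s - c‖ :=
    (convex_Icc a b).norm_image_sub_le_of_norm_hasDerivWithin_le
      (fun r hr => (ht r hr).1.hasDerivWithinAt) (fun r hr => (ht r hr).2.le) hcab hs
  have hdist : ‖s - c‖ ≤ b - a := abs_sub_le_of_le_of_le hs.1 hs.2 hcab.1 hcab.2
  calc ‖h t s‖ ≤ ‖h t s - h t c‖ + ‖h t c‖ := norm_le_norm_sub_add _ _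
    _ < η * (b - a) + η :=
        add_lt_add_of_le_of_lt (hmvt.trans (mul_le_mul_of_nonneg_left hdist hη0.le)) htc
    _ = ε := by rw [hη]; field_simp

theorem tendsto_prod_nhds_of_hasDerivAt {f f' : ι → ℝ → E} {g g' : ℝ → E} (hI : IsOpen I)
    (hI' : I.OrdConnected) (hc : c ∈ I) (hfc : Tendsto (fun t => f t c) l (𝓝 (g c)))
    (hf : ∀ s ∈ I, ∀ᶠ p in l ×ˢ 𝓝 s, HasDerivAt (f p.1) (f' p.1 p.2) p.2)
    (hg : ∀ s ∈ I, HasDerivAt g (g' s) s) (hg' : ContinuousOn g' I)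
    (hf' : ∀ s ∈ I, Tendsto (fun p : ι × ℝ => f' p.1 p.2) (l ×ˢ 𝓝 s) (𝓝 (g' s))) (hx : x ∈ I) :
    Tendsto (fun p : ι × ℝ => f p.1 p.2) (l ×ˢ 𝓝 x) (𝓝 (g x)) := by
  have hzero : Tendsto (fun p : ι × ℝ => f p.1 p.2 - g p.2) (l ×ˢ 𝓝 x) (𝓝 0) := by
    refine tendsto_zero_prod_nhds_of_hasDerivAt (h := fun t s => f t s - g s)
      (h' := fun t s => f' t s - g' s) hI hI' hc (tendsto_sub_nhds_zero_iff.2 hfc) ?_ ?_ hx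
    · intro s hs
      filter_upwards [hf s hs, tendsto_snd.eventually (hI.mem_nhds hs)] with p hp hpI
      exact hp.sub (hg p.2 hpI)
    · intro s hs
      simpa only [sub_self, Function.comp_def] using
        (hf' s hs).sub ((hg'.continuousAt (hI.mem_nhds hs)).tendsto.comp tendsto_snd)
  simpa only [zero_add, sub_add_cancel, Function.comp_def] using
    hzero.add ((hg x hx).continuousAt.tendsto.comp tendsto_snd)

theorem tendsto_exp_mul_sub_one_div {α : Type*} {l : Filter α} {a y : α → ℝ} {c : ℝ}
    (ha : Tendsto a l (𝓝 0)) (ha0 : ∀ᶠ p in l, a p ≠ 0) (hy : Tendsto y l (𝓝 c)) :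
    Tendsto (fun p => (exp (a p * y p) - 1) / a p) l (𝓝 c) := by
  have hslope : Tendsto (fun p => dslope exp 0 (a p * y p)) l (𝓝 1) := by
    have hcont : Tendsto (dslope exp 0) (𝓝 0) (𝓝 1) := by
      simpa only [dslope_same, Real.deriv_exp, exp_zero] using
        (continuousAt_dslope_same.2 (differentiableAt_exp (x := 0))).tendsto
    exact hcont.comp (by simpa only [zero_mul] using ha.mul hy)
  refine Tendsto.congr' ?_ (by simpa only [one_mul] using hslope.mul hy)
  filter_upwards [ha0] with p hp
  have hsecant := sub_smul_dslope exp 0 (a p * y p)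
  rw [sub_zero, exp_zero, smul_eq_mul] at hsecant
  rw [← hsecant]
  field_simp

end ContinuousConvergence

section Sign

variable {f f' : ℝ → ℝ}

theorem eventually_pos_or_eventually_neg_of_hasDerivAt
    (hf : ∀ᶠ t in atTop, HasDerivAt f (f' t) t) (hf' : ∀ᶠ t in atTop, f' t ≠ 0) :
    (∀ᶠ t in atTop, 0 < f' t) ∨ ∀ᶠ t in atTop, f' t < 0 := by
  obtain ⟨T, hT⟩ := eventually_atTop.1 (hf.and hf')
  rcases hasDerivWithinAt_forall_lt_or_forall_gt_of_forall_ne (convex_Ici T)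
    (fun t ht => (hT t ht).1.hasDerivWithinAt) (fun t ht => (hT t ht).2) with hneg | hpos
  · exact Or.inr (eventually_atTop.2 ⟨T, hneg⟩)
  · exact Or.inl (eventually_atTop.2 ⟨T, hpos⟩)

theorem tendsto_fst_mul_snd_atTop {s : ℝ} (hs : 0 < s) :
    Tendsto (fun p : ℝ × ℝ => p.1 * p.2) (atTop ×ˢ 𝓝 s) atTop :=
  tendsto_fst.atTop_mul_pos hs tendsto_snd

theorem eventually_div_pos_of_hasDerivAt {s : ℝ}
    (hf : ∀ᶠ t in atTop, HasDerivAt f (f' t) t) (hf' : ∀ᶠ t in atTop, f' t ≠ 0) (hs : 0 < s) :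
    ∀ᶠ p : ℝ × ℝ in atTop ×ˢ 𝓝 s, 0 < f' (p.1 * p.2) / f' p.1 := by
  rcases eventually_pos_or_eventually_neg_of_hasDerivAt hf hf' with h | h <;>
    filter_upwards [tendsto_fst.eventually h, (tendsto_fst_mul_snd_atTop hs).eventually h]
      with p hp hps
  · exact div_pos hps hp
  · exact div_pos_of_neg_of_neg hps hp

end Sign

/-- The increment `|f (t + u) - f t|` truncated at `1`, so that it is integrable in `u` for every
measurable `f` and dominated convergence applies. -/
def truncIncrement (f : ℝ → ℝ) (t u : ℝ) : ℝ :=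
  min 1 |f (t + u) - f t|

namespace truncIncrement

variable {f : ℝ → ℝ}

theorem nonneg (f : ℝ → ℝ) (t u : ℝ) : 0 ≤ truncIncrement f t u :=
  le_min zero_le_one (abs_nonneg _)

theorem norm_le_one (f : ℝ → ℝ) (t u : ℝ) : ‖truncIncrement f t u‖ ≤ 1 :=
  (Real.norm_of_nonneg (nonneg f t u)).trans_le (min_le_left _ _)

theorem le_add (f : ℝ → ℝ) (t u v : ℝ) :
    truncIncrement f t u ≤ truncIncrement f t (u + v) + truncIncrement f (t + u) v := by
  have htri : |f (t + u) - f t| ≤ |f (t + (u + v)) - f t| + |f (t + u + v) - f (t + u)| := by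
    rw [← add_assoc, abs_sub_comm (f (t + u + v)) (f (t + u)), add_comm |f (t + u + v) - f t|]
    exact abs_sub_le _ _ _
  have h1 := abs_nonneg (f (t + (u + v)) - f t)
  have h2 := abs_nonneg (f (t + u + v) - f (t + u))
  unfold truncIncrement
  grind

theorem measurable (hf : Measurable f) (t : ℝ) : Measurable (truncIncrement f t) := by
  unfold truncIncrement
  fun_prop

theorem intervalIntegrable (hf : Measurable f) (t a b : ℝ) :
    IntervalIntegrable (truncIncrement f t) volume a b :=
  (intervalIntegrable_const (c := (1 : ℝ))).mono_fun (measurable hf t).aestronglyMeasurable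
    (Eventually.of_forall fun u => by simpa only [norm_one] using norm_le_one f t u)

theorem tendsto_intervalIntegral (hf : Measurable f)
    (h : ∀ u, Tendsto (fun t => f (t + u) - f t) atTop (𝓝 0)) (a b : ℝ) :
    Tendsto (fun t => ∫ u in a..b, truncIncrement f t u) atTop (𝓝 0) := by
  have hpointwise : ∀ u, Tendsto (fun t => truncIncrement f t u) atTop (𝓝 0) := fun u => by
    simpa only [truncIncrement, abs_zero, min_eq_right zero_le_one] using
      (tendsto_const_nhds (x := (1 : ℝ))).min (h u).abs
  simpa only [intervalIntegral.integral_zero] using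
    intervalIntegral.tendsto_integral_filter_of_dominated_convergence (fun _ => (1 : ℝ))
      (Eventually.of_forall fun t => (measurable hf t).aestronglyMeasurable)
      (Eventually.of_forall fun t => ae_of_all _ fun u _ => norm_le_one f t u)
      intervalIntegrable_const (ae_of_all _ fun u _ => hpointwise u)

theorem le_intervalIntegral_add (hf : Measurable f) (t u : ℝ) :
    truncIncrement f t u ≤
      (∫ v in u..u + 1, truncIncrement f t v) + ∫ v in (0 : ℝ)..1, truncIncrement f (t + u) v := by
  have hshift : IntervalIntegrable (fun v => truncIncrement f t (u + v)) volume 0 1 := by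
    simpa only [sub_self, add_sub_cancel_left] using
      (intervalIntegrable hf t u (u + 1)).comp_add_left u
  have hright := intervalIntegrable hf (t + u) 0 1
  calc truncIncrement f t u = ∫ _ in (0 : ℝ)..1, truncIncrement f t u := by
        rw [intervalIntegral.integral_const, sub_zero, one_smul]
    _ ≤ ∫ v in (0 : ℝ)..1, (truncIncrement f t (u + v) + truncIncrement f (t + u) v) :=
        intervalIntegral.integral_mono_on zero_le_one intervalIntegrable_const
          (hshift.add hright) fun v _ => le_add f t u v
    _ = _ := by
        rw [intervalIntegral.integral_add hshift hright,
          intervalIntegral.integral_comp_add_left (truncIncrement f t), add_zero]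

end truncIncrement

/-- The increment at `u` is bounded by the increments at `u + v` and, from the base point `t + u`,
at `v`. Averaging over `v ∈ [0, 1]` replaces pointwise by integral quantities, which vanish
uniformly for `u` near `u₀`. -/
theorem tendsto_add_sub_prod_nhds {f : ℝ → ℝ} (hf : Measurable f)
    (h : ∀ u, Tendsto (fun t => f (t + u) - f t) atTop (𝓝 0)) (u₀ : ℝ) :
    Tendsto (fun p : ℝ × ℝ => f (p.1 + p.2) - f p.1) (atTop ×ˢ 𝓝 u₀) (𝓝 0) := by
  have hfar := truncIncrement.tendsto_intervalIntegral hf h 0 1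
  have hnear := truncIncrement.tendsto_intervalIntegral hf h (u₀ - 1) (u₀ + 2)
  have htrunc : Tendsto (fun p : ℝ × ℝ => truncIncrement f p.1 p.2) (atTop ×ˢ 𝓝 u₀) (𝓝 0) := by
    refine squeeze_zero' (Eventually.of_forall fun p => truncIncrement.nonneg f p.1 p.2) ?_
      (by simpa only [add_zero, Function.comp_def] using
        (hnear.comp tendsto_fst).add (hfar.comp (tendsto_fst.atTop_add tendsto_snd)))
    filter_upwards [tendsto_snd.eventually (Ioo_mem_nhds (sub_one_lt u₀) (lt_add_one u₀))]
      with ⟨t, u⟩ ⟨hu₁, hu₂⟩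
    refine (truncIncrement.le_intervalIntegral_add hf t u).trans (add_le_add_left ?_ _)
    exact intervalIntegral.integral_mono_interval hu₁.le (by linarith) (by linarith)
      (ae_of_all _ (truncIncrement.nonneg f t)) (truncIncrement.intervalIntegrable hf t _ _)
  rw [tendsto_zero_iff_abs_tendsto_zero]
  refine htrunc.congr' ?_
  filter_upwards [htrunc.eventually (gt_mem_nhds one_pos)] with p hp
  exact min_eq_right ((min_lt_iff.1 hp).resolve_left (lt_irrefl 1)).le

/-- Regular variation of `f` at infinity with index `ρ`. Measurability and eventual positivity,
often part of the definition, are separate hypotheses here. -/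
def IsRegularlyVarying (f : ℝ → ℝ) (ρ : ℝ) : Prop :=
  ∀ x > 0, Tendsto (fun t => f (t * x) / f t) atTop (𝓝 (x ^ ρ))

namespace IsRegularlyVarying

variable {f g : ℝ → ℝ} {ρ s : ℝ}

theorem eventually_ne_zero (hf : IsRegularlyVarying f ρ) : ∀ᶠ t in atTop, f t ≠ 0 := by
  have hlim := hf 1 one_pos
  rw [one_rpow] at hlim
  filter_upwards [hlim.eventually_ne one_ne_zero] with t ht
  exact (div_ne_zero_iff.1 ht).2

theorem congr' (hf : IsRegularlyVarying f ρ) (hfg : f =ᶠ[atTop] g) : IsRegularlyVarying g ρ :=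
  fun x hx => (hf x hx).congr' <|
    (((tendsto_id.atTop_mul_const hx).eventually hfg).and hfg).mono fun _ ht =>
      congrArg₂ (· / ·) ht.1 ht.2

theorem tendsto_log_exp_sub (hf : IsRegularlyVarying f ρ) (u : ℝ) :
    Tendsto (fun t => (log (f (exp (t + u))) - ρ * (t + u)) - (log (f (exp t)) - ρ * t))
      atTop (𝓝 0) := by
  have hlog : Tendsto (fun t => log (f (exp t * exp u) / f (exp t))) atTop (𝓝 (ρ * u)) := by
    have hpos := rpow_pos_of_pos (exp_pos u) ρ
    simpa only [log_rpow (exp_pos u), log_exp, Function.comp_def] using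
      ((hf (exp u) (exp_pos u)).comp tendsto_exp_atTop).log hpos.ne'
  refine (tendsto_sub_nhds_zero_iff.2 hlog).congr' ?_
  have hne := tendsto_exp_atTop.eventually hf.eventually_ne_zero
  filter_upwards [hne, (tendsto_atTop_add_const_right atTop u tendsto_id).eventually hne]
    with t ht htu
  rw [id] at htu
  rw [← exp_add, log_div htu ht]
  ring

theorem tendsto_prod_nhds (hf : IsRegularlyVarying f ρ) (hfm : Measurable f)
    (hpos : ∀ᶠ t in atTop, 0 < f t) (hs : 0 < s) :
    Tendsto (fun p : ℝ × ℝ => f (p.1 * p.2) / f p.1) (atTop ×ˢ 𝓝 s) (𝓝 (s ^ ρ)) := by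
  set h : ℝ → ℝ := fun t => log (f (exp t)) - ρ * t with hh
  have hh_lim : Tendsto (fun p : ℝ × ℝ => h (log p.1 + log p.2) - h (log p.1))
      (atTop ×ˢ 𝓝 s) (𝓝 0) :=
    (tendsto_add_sub_prod_nhds (by fun_prop) hf.tendsto_log_exp_sub (log s)).comp
      (tendsto_log_atTop.prodMap (continuousAt_log hs.ne').tendsto)
  have hrpow : Tendsto (fun p : ℝ × ℝ => p.2 ^ ρ) (atTop ×ˢ 𝓝 s) (𝓝 (s ^ ρ)) :=
    (continuousAt_rpow_const s ρ (Or.inl hs.ne')).tendsto.comp tendsto_snd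
  have hprod := hh_lim.rexp.mul hrpow
  rw [exp_zero, one_mul] at hprod
  refine hprod.congr' ?_
  filter_upwards [tendsto_fst.eventually hpos, tendsto_fst.eventually (eventually_gt_atTop 0),
    (tendsto_fst_mul_snd_atTop hs).eventually hpos, tendsto_snd.eventually (lt_mem_nhds hs)]
    with ⟨t, r⟩ hft ht hftr hr
  have hincr : h (log t + log r) - h (log t) = log (f (t * r) / f t) - log r * ρ := by
    simp only [hh]
    rw [← log_mul ht.ne' hr.ne', exp_log ht, exp_log (mul_pos ht hr), log_div hftr.ne' hft.ne',
      log_mul ht.ne' hr.ne']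
    ring
  rw [hincr, exp_sub, exp_log (div_pos hftr hft), ← rpow_def_of_pos hr,
    div_mul_cancel₀ _ (rpow_pos_of_pos hr ρ).ne']

end IsRegularlyVarying

section SecondOrder

variable {A : ℝ → ℝ} {γ ρ s : ℝ}

/-- `A` agrees with `t ↦ t * V' t`, so it is eventually measurable and, by Darboux's theorem,
eventually of constant sign: this lifts the uniform convergence theorem from `|A|` to `A`. -/
theorem tendsto_mul_div_prod_nhds_of_hasDerivAt {V : ℝ → ℝ}
    (hV : ∀ᶠ t in atTop, HasDerivAt V (A t / t) t) (hA : IsRegularlyVarying (fun t => |A t|) ρ)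
    (hs : 0 < s) :
    Tendsto (fun p : ℝ × ℝ => A (p.1 * p.2) / A p.1) (atTop ×ˢ 𝓝 s) (𝓝 (s ^ ρ)) := by
  have hAV : A =ᶠ[atTop] fun t => t * deriv V t := by
    filter_upwards [hV, eventually_gt_atTop 0] with t ht ht0
    rw [ht.deriv, mul_div_cancel₀ _ ht0.ne']
  have hA0 : ∀ᶠ t in atTop, A t ≠ 0 := hA.eventually_ne_zero.mono fun _ => abs_ne_zero.1
  have habs : ∀ᶠ t in atTop, 0 < |t * deriv V t| := by
    filter_upwards [hA0, hAV] with t ht htV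
    exact htV ▸ abs_pos.2 ht
  have habs_rv : IsRegularlyVarying (fun t => |t * deriv V t|) ρ := hA.congr' (hAV.fun_comp abs)
  have hunif := habs_rv.tendsto_prod_nhds (by fun_prop) habs hs
  have hsign := eventually_div_pos_of_hasDerivAt hV
    ((hA0.and (eventually_ne_atTop 0)).mono fun t ht => div_ne_zero ht.1 ht.2) hs
  refine hunif.congr' ?_
  filter_upwards [tendsto_fst.eventually hAV, (tendsto_fst_mul_snd_atTop hs).eventually hAV,
    hsign, tendsto_fst.eventually (eventually_gt_atTop 0), tendsto_snd.eventually (lt_mem_nhds hs)]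
    with ⟨t, r⟩ ht htr hquot ht0 hr0
  have hpos : 0 < A (t * r) / A t := by
    have hscale : A (t * r) / A t = A (t * r) / (t * r) / (A t / t) * r := by field_simp
    exact hscale ▸ mul_pos hquot hr0
  rw [← htr, ← ht, ← abs_div, abs_of_pos hpos]

theorem hasDerivAt_comp_mul_left_sub_div {f : ℝ → ℝ} {f' t : ℝ} (c : ℝ)
    (hf : HasDerivAt f f' (t * s)) :
    HasDerivAt (fun r => (f (t * r) - f t) / c) (t * f' / c) s := by
  simpa only [mul_one, mul_comm f', id, Function.comp_def] using
    ((hf.comp s ((hasDerivAt_id s).const_mul t)).sub_const (f t)).div_const c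

theorem tendsto_sub_div_prod_nhds_of_hasDerivAt {V : ℝ → ℝ}
    (hV : ∀ᶠ t in atTop, HasDerivAt V (A t / t) t) (hA : IsRegularlyVarying (fun t => |A t|) ρ)
    (hs : 0 < s) :
    Tendsto (fun p : ℝ × ℝ => (V (p.1 * p.2) - V p.1) / A p.1) (atTop ×ˢ 𝓝 s)
      (𝓝 (∫ r in (1 : ℝ)..s, r ^ (ρ - 1))) := by
  have hcont := continuousOn_rpow_const_Ioi (ρ - 1)
  refine tendsto_prod_nhds_of_hasDerivAt (f := fun t r => (V (t * r) - V t) / A t)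
    (f' := fun t r => t * (A (t * r) / (t * r)) / A t)
    (g := fun r => ∫ q in (1 : ℝ)..r, q ^ (ρ - 1))
    isOpen_Ioi ordConnected_Ioi (mem_Ioi.2 one_pos) ?_ ?_
    (fun r hr => hasDerivAt_intervalIntegral_of_continuousOn isOpen_Ioi ordConnected_Ioi
      hcont (mem_Ioi.2 one_pos) hr) hcont ?_ hs
  · simp only [mul_one, sub_self, zero_div, intervalIntegral.integral_same, tendsto_const_nhds]
  · intro r hr
    exact ((tendsto_fst_mul_snd_atTop hr).eventually hV).mono fun p hp =>
      hasDerivAt_comp_mul_left_sub_div (A p.1) hp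
  · intro r hr
    have hquot := (tendsto_mul_div_prod_nhds_of_hasDerivAt hV hA hr).div tendsto_snd (ne_of_gt hr)
    rw [← rpow_sub_one (ne_of_gt hr)] at hquot
    refine hquot.congr' ?_
    filter_upwards [tendsto_fst.eventually (eventually_ne_atTop 0)] with p hp
    simp only [Pi.div_apply]
    field_simp

variable {U U' U'' : ℝ → ℝ}

theorem eventually_ne_zero_of_tendsto_zero
    (hA : ∀ᶠ t in atTop, A t = t * U'' t / U' t + 1 - γ) (hA_lim : Tendsto A atTop (𝓝 0))
    (hA0 : ∀ᶠ t in atTop, A t ≠ 0) : ∀ᶠ t in atTop, U' t ≠ 0 := by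
  -- At a zero of `U'` the convention `x / 0 = 0` gives `A t = 1 - γ`.
  have hA_ne : ∀ᶠ t in atTop, A t ≠ 1 - γ := by
    rcases eq_or_ne (0 : ℝ) (1 - γ) with h | h
    · exact h ▸ hA0
    · exact hA_lim.eventually_ne h
  filter_upwards [hA, hA_ne] with t ht ht_ne hU't
  exact ht_ne (by rw [ht, hU't, div_zero, zero_add])

theorem hasDerivAt_log_sub_mul_log {f : ℝ → ℝ} {f' t : ℝ} (γ : ℝ) (hf : HasDerivAt f f' t)
    (hft : f t ≠ 0) (ht : t ≠ 0) :
    HasDerivAt (fun t => log (f t) - (γ - 1) * log t) ((t * f' / f t + 1 - γ) / t) t := by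
  refine ((hf.log hft).sub ((hasDerivAt_log ht).const_mul (γ - 1))).congr_deriv ?_
  field_simp
  ring

theorem div_eq_rpow_mul_exp_log_sub {f : ℝ → ℝ} {t : ℝ} (γ : ℝ) (ht : 0 < t) (hs : 0 < s)
    (hf : 0 < f (t * s) / f t) :
    f (t * s) / f t = s ^ (γ - 1) *
      exp ((log (f (t * s)) - (γ - 1) * log (t * s)) - (log (f t) - (γ - 1) * log t)) := by
  obtain ⟨hfts, hft⟩ := div_ne_zero_iff.1 hf.ne'
  rw [log_mul ht.ne' hs.ne', rpow_def_of_pos hs, ← exp_add]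
  calc f (t * s) / f t = exp (log (f (t * s)) - log (f t)) := by
        rw [← log_div hfts hft, exp_log hf]
    _ = _ := by ring_nf

theorem tendsto_deriv_quotient_sub_rpow_div
    (hU : ∀ᶠ t in atTop, HasDerivAt U (U' t) t)
    (hU' : ∀ᶠ t in atTop, HasDerivAt U' (U'' t) t)
    (hA : ∀ᶠ t in atTop, A t = t * U'' t / U' t + 1 - γ) (hA_lim : Tendsto A atTop (𝓝 0))
    (hA_rv : IsRegularlyVarying (fun t => |A t|) ρ) (hs : 0 < s) :
    Tendsto (fun p : ℝ × ℝ => (U' (p.1 * p.2) / U' p.1 - p.2 ^ (γ - 1)) / A p.1) (atTop ×ˢ 𝓝 s)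
      (𝓝 (s ^ (γ - 1) * ∫ r in (1 : ℝ)..s, r ^ (ρ - 1))) := by
  have hA0 : ∀ᶠ t in atTop, A t ≠ 0 := hA_rv.eventually_ne_zero.mono fun _ => abs_ne_zero.1
  have hU'0 := eventually_ne_zero_of_tendsto_zero hA hA_lim hA0
  let V : ℝ → ℝ := fun t => log (U' t) - (γ - 1) * log t
  have hV : ∀ᶠ t in atTop, HasDerivAt V (A t / t) t := by
    filter_upwards [hU', hU'0, hA, eventually_ne_atTop 0] with t hUt hUt0 hAt ht
    exact hAt ▸ hasDerivAt_log_sub_mul_log γ hUt hUt0 ht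
  have hA0_fst : ∀ᶠ p : ℝ × ℝ in atTop ×ˢ 𝓝 s, A p.1 ≠ 0 := tendsto_fst.eventually hA0
  have hexp := tendsto_exp_mul_sub_one_div (hA_lim.comp tendsto_fst) hA0_fst
    (tendsto_sub_div_prod_nhds_of_hasDerivAt hV hA_rv hs)
  have hrpow : Tendsto (fun p : ℝ × ℝ => p.2 ^ (γ - 1)) (atTop ×ˢ 𝓝 s) (𝓝 (s ^ (γ - 1))) :=
    (continuousAt_rpow_const s (γ - 1) (Or.inl hs.ne')).tendsto.comp tendsto_snd
  refine (hrpow.mul hexp).congr' ?_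
  filter_upwards [hA0_fst, tendsto_fst.eventually (eventually_gt_atTop 0),
    tendsto_snd.eventually (lt_mem_nhds hs), eventually_div_pos_of_hasDerivAt hU hU'0 hs]
    with ⟨t, r⟩ hAt ht hr hquot
  rw [div_eq_rpow_mul_exp_log_sub γ ht hr hquot, Function.comp_apply, mul_div_cancel₀ _ hAt]
  ring

theorem second_order_condition_U_general
    (hU : ∀ᶠ t in atTop, HasDerivAt U (U' t) t)
    (hU' : ∀ᶠ t in atTop, HasDerivAt U' (U'' t) t)
    (hA : ∀ᶠ t in atTop, A t = t * U'' t / U' t + 1 - γ) (hA_lim : Tendsto A atTop (𝓝 0))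
    (hA_rv : IsRegularlyVarying (fun t => |A t|) ρ) {x : ℝ} (hx : 0 < x) :
    Tendsto (fun p : ℝ × ℝ => ((U (p.1 * p.2) - U p.1) / (p.1 * U' p.1)
        - ∫ u in (1 : ℝ)..p.2, u ^ (γ - 1)) / A p.1)
      (atTop ×ˢ 𝓝 x) (𝓝 (Kfun γ ρ x)) := by
  have hpow (p : ℝ) := continuousOn_rpow_const_Ioi p
  have hprim {g : ℝ → ℝ} (hg : ContinuousOn g (Ioi 0)) (s : ℝ) (hs : s ∈ Ioi 0) :
      HasDerivAt (fun y => ∫ u in (1 : ℝ)..y, g u) (g s) s :=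
    hasDerivAt_intervalIntegral_of_continuousOn isOpen_Ioi ordConnected_Ioi hg
      (mem_Ioi.2 one_pos) hs
  have hKcont : ContinuousOn
      (fun s : ℝ => s ^ (γ - 1) * ∫ r in (1 : ℝ)..s, r ^ (ρ - 1)) (Ioi 0) :=
    (hpow (γ - 1)).mul (HasDerivAt.continuousOn (hprim (hpow (ρ - 1))))
  refine tendsto_prod_nhds_of_hasDerivAt
    (f := fun t s => ((U (t * s) - U t) / (t * U' t) - ∫ u in (1 : ℝ)..s, u ^ (γ - 1)) / A t)
    (f' := fun t s => (U' (t * s) / U' t - s ^ (γ - 1)) / A t) (g := Kfun γ ρ)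
    isOpen_Ioi ordConnected_Ioi (mem_Ioi.2 one_pos) ?_ ?_ (hprim hKcont) hKcont
    (fun s hs => tendsto_deriv_quotient_sub_rpow_div hU hU' hA hA_lim hA_rv hs) hx
  · simp only [mul_one, sub_self, zero_div, Kfun, intervalIntegral.integral_same,
      tendsto_const_nhds]
  · intro s hs
    filter_upwards [(tendsto_fst_mul_snd_atTop hs).eventually hU,
      tendsto_fst.eventually (eventually_ne_atTop 0), tendsto_snd.eventually (Ioi_mem_nhds hs)]
      with ⟨t, r⟩ hUtr ht hr
    have hquot := hasDerivAt_comp_mul_left_sub_div (t * U' t) hUtr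
    rw [mul_div_mul_left _ _ ht] at hquot
    exact (hquot.sub (hprim (hpow (γ - 1)) r hr)).div_const (A t)

end SecondOrder

/-- Second-order regular variation of `U`: under (C1)–(C2),
`((U(tx) − U(t))/(t U'(t)) − (x^γ − 1)/γ) / A(t) → K_{γ,ρ}(x)` as `t → ∞`, for `x > 0`. -/
theorem second_order_condition_U
    (F Ufun U' U'' : ℝ → ℝ) (γ : ℝ) (hγ : 0 < γ)
    (hUinv : ∀ t > 1, 1 - F (Ufun t) = 1 / t)
    (hU' : ∀ t > 1, HasDerivAt Ufun (U' t) t)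
    (hU'' : ∀ t > 1, HasDerivAt U' (U'' t) t)
    (Afun : ℝ → ℝ) (hAdef : ∀ t, Afun t = t * U'' t / U' t + 1 - γ)
    (hC1 : Tendsto Afun atTop (nhds 0))
    (hSign : ∃ T : ℝ, (∀ t ≥ T, 0 < Afun t) ∨ (∀ t ≥ T, Afun t < 0))
    (ρ : ℝ) (hρ : ρ ≤ 0)
    (hRV : ∀ x > 0, Tendsto (fun t => |Afun (t * x)| / |Afun t|) atTop (nhds (x ^ ρ))) :
    ∀ x > (0:ℝ),
      Tendsto (fun t => ((Ufun (t * x) - Ufun t) / (t * U' t) - (x ^ γ - 1) / γ) / Afun t)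
        atTop (nhds (Kfun γ ρ x)) := by
  intro x hx
  have hlim := second_order_condition_U_general ((eventually_gt_atTop 1).mono hU')
    ((eventually_gt_atTop 1).mono hU'') (.of_forall hAdef) hC1 hRV hx
  simpa only [Function.comp_def, id, integral_rpow (Or.inl (show -1 < γ - 1 by linarith)),
    sub_add_cancel, one_rpow] using hlim.comp (tendsto_id.prodMk tendsto_const_nhds)
end
end

section
/- Let γ > 0 and r < 1/3. There exist positive constants c₁, c₁', c₂, c₃ (depending only on r and γ) and a neighborhood of θ₀ = 1 such that for all θ in this neighborhood and all z ≥ 0: (1) ‖g₀(z,θ)‖³ ≤ G₁(z) := c₁·(log(1+γz) + (1+γz)^{r/γ} + c₁')³; (2) ‖∂g₀/∂θ(z,θ)‖ ≤ G₂(z) := c₂·(z(1+γz)^{−1} + z(1+γz)^{r/γ−1}); (3) ‖∂²g₀/∂θ²(z,θ)‖ ≤ G₃(z) := c₃·(z(1+γz)^{−1} + z(1+γz)^{r/γ−1} + z²(1+γz)^{−2} + z²(1+γz)^{r/γ−2}). -/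
open MeasureTheory ProbabilityTheory Filter Real NNReal

noncomputable section

/-- The estimating function `g(y, γ, σ)` from Zhang's estimating equations. -/
def gfun (r γ σ y : ℝ) : Fin 2 → ℝ :=
  ![Real.log (1 + γ * y / σ) - γ,
    (1 + γ * y / σ) ^ (r / γ) - 1 / (1 - r)]

/-- The θ-derivative `∂g₀/∂θ(z, θ)`. -/
def dgfun (r γ θ z : ℝ) : Fin 2 → ℝ :=
  ![-(γ * z) / θ ^ 2 * (1 + γ * z / θ)⁻¹,
    -(r * z) / θ ^ 2 * (1 + γ * z / θ) ^ (r / γ - 1)]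

/-!
For `θ ∈ [κ⁻¹, κ]` and `x ≥ 0` the quantities `1 + x / θ` and `1 + x` agree up to a factor `κ`, so
their `p`-th powers agree up to `κ ^ |p|` and their logarithms up to `log κ`. Both coordinates of
`∂g₀/∂θ` are multiples of the kernel `z θ⁻² (1 + γ z / θ) ^ q`, with `q = -1` and `q = r / γ - 1`,
so the bounds on `∂g₀/∂θ` and `∂²g₀/∂θ²` come from those on this kernel and its derivative.
-/

section OrderedField

variable {K : Type*} [Field K] [LinearOrder K] [IsStrictOrderedRing K] {κ θ x : K}

theorem pos_of_mem_Icc_inv (hκ : 1 ≤ κ) (hθ : θ ∈ Set.Icc κ⁻¹ κ) : 0 < θ :=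
  (inv_pos.2 (one_pos.trans_le hκ)).trans_le hθ.1

theorem inv_le_of_mem_Icc_inv (hκ : 1 ≤ κ) (hθ : θ ∈ Set.Icc κ⁻¹ κ) : θ⁻¹ ≤ κ :=
  inv_le_of_inv_le₀ (one_pos.trans_le hκ) hθ.1

theorem one_add_div_le_mul (hκ : 1 ≤ κ) (hθ : θ ∈ Set.Icc κ⁻¹ κ) (hx : 0 ≤ x) :
    1 + x / θ ≤ κ * (1 + x) := by
  have hdiv : x / θ ≤ κ * x := by
    rw [div_eq_inv_mul]
    exact mul_le_mul_of_nonneg_right (inv_le_of_mem_Icc_inv hκ hθ) hx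
  linarith

theorem one_add_le_mul_one_add_div (hκ : 1 ≤ κ) (hθ : θ ∈ Set.Icc κ⁻¹ κ) (hx : 0 ≤ x) :
    1 + x ≤ κ * (1 + x / θ) := by
  have hθ₀ := pos_of_mem_Icc_inv hκ hθ
  have hmul : x ≤ κ * (x / θ) := by
    calc x = θ * (x / θ) := (mul_div_cancel₀ x hθ₀.ne').symm
      _ ≤ κ * (x / θ) := mul_le_mul_of_nonneg_right hθ.2 (by positivity)
  linarith

end OrderedField

section Comparison

variable {κ θ x : ℝ}

theorem rpow_le_rpow_abs_mul_rpow {u w : ℝ} (hu : 0 < u) (hw : 0 < w) (huw : u ≤ κ * w)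
    (hwu : w ≤ κ * u) (p : ℝ) : u ^ p ≤ κ ^ |p| * w ^ p := by
  have hκ : 0 < κ := pos_of_mul_pos_left (hu.trans_le huw) hw.le
  rcases le_total 0 p with hp | hp
  · rw [abs_of_nonneg hp, ← mul_rpow hκ.le hw.le]
    exact rpow_le_rpow hu.le huw hp
  · rw [abs_of_nonpos hp, rpow_neg hκ.le, ← inv_rpow hκ.le, ← mul_rpow (by positivity) hw.le]
    exact rpow_le_rpow_of_nonpos (by positivity) ((inv_mul_le_iff₀ hκ).2 hwu) hp

theorem one_add_div_rpow_le (hκ : 1 ≤ κ) (hθ : θ ∈ Set.Icc κ⁻¹ κ) (hx : 0 ≤ x) (p : ℝ) :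
    (1 + x / θ) ^ p ≤ κ ^ |p| * (1 + x) ^ p := by
  have hθ₀ := pos_of_mem_Icc_inv hκ hθ
  exact rpow_le_rpow_abs_mul_rpow (by positivity) (by positivity) (one_add_div_le_mul hκ hθ hx)
    (one_add_le_mul_one_add_div hκ hθ hx) p

theorem log_one_add_div_le (hκ : 1 ≤ κ) (hθ : θ ∈ Set.Icc κ⁻¹ κ) (hx : 0 ≤ x) :
    log (1 + x / θ) ≤ log κ + log (1 + x) := by
  have hθ₀ := pos_of_mem_Icc_inv hκ hθ
  rw [← log_mul (by positivity) (by positivity)]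
  exact log_le_log (by positivity) (one_add_div_le_mul hκ hθ hx)

end Comparison

theorem norm_vec_two_le_add {E : Type*} [SeminormedAddCommGroup E] (x y : E) :
    ‖![x, y]‖ ≤ ‖x‖ + ‖y‖ := by
  rw [pi_norm_le_iff_of_nonneg (by positivity), Fin.forall_fin_two]
  exact ⟨le_add_of_nonneg_right (norm_nonneg y), le_add_of_nonneg_left (norm_nonneg x)⟩

theorem mul_add_mul_le_add_mul_add {R : Type*} [Semiring R] [PartialOrder R] [IsOrderedRing R]
    {a b x y : R} (ha : 0 ≤ a) (hb : 0 ≤ b) (hx : 0 ≤ x) (hy : 0 ≤ y) :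
    a * x + b * y ≤ (a + b) * (x + y) := by
  rw [add_mul]
  gcongr
  · exact le_add_of_nonneg_right hy
  · exact le_add_of_nonneg_left hx

section Deriv

variable {𝕜 : Type*} [NontriviallyNormedField 𝕜] {θ : 𝕜}

theorem hasDerivAt_one_add_div (x : 𝕜) (hθ : θ ≠ 0) :
    HasDerivAt (fun t ↦ 1 + x / t) (-(x / θ ^ 2)) θ := by
  simpa [div_eq_mul_inv] using ((hasDerivAt_inv hθ).const_mul x).const_add 1

theorem hasDerivAt_div_sq (x : 𝕜) (hθ : θ ≠ 0) :
    HasDerivAt (fun t ↦ x / t ^ 2) (-(2 * x / θ ^ 3)) θ := by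
  refine ((hasDerivAt_const θ x).div (hasDerivAt_pow 2 θ) (pow_ne_zero 2 hθ)).congr_deriv ?_
  field_simp
  norm_num
  ring

end Deriv

/-- The kernel `z θ⁻² (1 + γ z / θ) ^ q`, as a function of its last argument `θ`. The coordinates
of `dgfun r γ θ z` are its multiples by `-γ` (for `q = -1`) and by `-r` (for `q = r / γ - 1`). -/
def scaleKernel (γ q z θ : ℝ) : ℝ :=
  z / θ ^ 2 * (1 + γ * z / θ) ^ q

section ScaleKernel

variable {γ κ z θ : ℝ}

theorem hasDerivAt_scaleKernel (q : ℝ) (hθ : θ ≠ 0) (hbase : 1 + γ * z / θ ≠ 0) :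
    HasDerivAt (scaleKernel γ q z)
      (-(2 * z / θ ^ 3 * (1 + γ * z / θ) ^ q
        + γ * q * (z ^ 2 / θ ^ 4) * (1 + γ * z / θ) ^ (q - 1))) θ := by
  refine ((hasDerivAt_div_sq z hθ).mul
    ((hasDerivAt_one_add_div (γ * z) hθ).rpow_const (p := q) (Or.inl hbase))).congr_deriv ?_
  field_simp
  ring

theorem abs_scaleKernel_le (q : ℝ) (hγ : 0 ≤ γ) (hκ : 1 ≤ κ) (hθ : θ ∈ Set.Icc κ⁻¹ κ)
    (hz : 0 ≤ z) : |scaleKernel γ q z θ| ≤ κ ^ 2 * κ ^ |q| * (z * (1 + γ * z) ^ q) := by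
  have hθ₀ := pos_of_mem_Icc_inv hκ hθ
  rw [scaleKernel, abs_of_nonneg (by positivity)]
  calc z / θ ^ 2 * (1 + γ * z / θ) ^ q = θ⁻¹ ^ 2 * z * (1 + γ * z / θ) ^ q := by ring
    _ ≤ κ ^ 2 * z * (κ ^ |q| * (1 + γ * z) ^ q) := by
      gcongr
      · exact inv_le_of_mem_Icc_inv hκ hθ
      · exact one_add_div_rpow_le hκ hθ (by positivity) q
    _ = κ ^ 2 * κ ^ |q| * (z * (1 + γ * z) ^ q) := by ring

theorem abs_deriv_scaleKernel_le (q : ℝ) (hγ : 0 ≤ γ) (hκ : 1 ≤ κ) (hθ : θ ∈ Set.Icc κ⁻¹ κ)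
    (hz : 0 ≤ z) :
    |deriv (scaleKernel γ q z) θ| ≤
      2 * κ ^ 3 * κ ^ |q| * (z * (1 + γ * z) ^ q)
        + γ * |q| * κ ^ 4 * κ ^ |q - 1| * (z ^ 2 * (1 + γ * z) ^ (q - 1)) := by
  have hθ₀ := pos_of_mem_Icc_inv hκ hθ
  have hγz : 0 ≤ γ * z := by positivity
  have hinv := inv_le_of_mem_Icc_inv hκ hθ
  rw [(hasDerivAt_scaleKernel q hθ₀.ne' (by positivity)).deriv, abs_neg]
  calc |2 * z / θ ^ 3 * (1 + γ * z / θ) ^ q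
        + γ * q * (z ^ 2 / θ ^ 4) * (1 + γ * z / θ) ^ (q - 1)|
    _ ≤ |2 * z / θ ^ 3 * (1 + γ * z / θ) ^ q|
        + |γ * q * (z ^ 2 / θ ^ 4) * (1 + γ * z / θ) ^ (q - 1)| := abs_add_le _ _
    _ = 2 * θ⁻¹ ^ 3 * z * (1 + γ * z / θ) ^ q
        + γ * |q| * θ⁻¹ ^ 4 * z ^ 2 * (1 + γ * z / θ) ^ (q - 1) := by
      rw [abs_of_nonneg (by positivity), abs_mul, abs_mul, abs_mul, abs_of_nonneg hγ,
        abs_of_nonneg (by positivity : 0 ≤ z ^ 2 / θ ^ 4),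
        abs_of_nonneg (by positivity : 0 ≤ (1 + γ * z / θ) ^ (q - 1))]
      ring
    _ ≤ 2 * κ ^ 3 * z * (κ ^ |q| * (1 + γ * z) ^ q)
        + γ * |q| * κ ^ 4 * z ^ 2 * (κ ^ |q - 1| * (1 + γ * z) ^ (q - 1)) := by
      gcongr <;> exact one_add_div_rpow_le hκ hθ hγz _
    _ = 2 * κ ^ 3 * κ ^ |q| * (z * (1 + γ * z) ^ q)
        + γ * |q| * κ ^ 4 * κ ^ |q - 1| * (z ^ 2 * (1 + γ * z) ^ (q - 1)) := by ring

theorem exists_abs_deriv_scaleKernel_le (q : ℝ) (hγ : 0 ≤ γ) (hκ : 1 ≤ κ) :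
    ∃ b > 0, ∀ θ ∈ Set.Icc κ⁻¹ κ, ∀ z, 0 ≤ z →
      |deriv (scaleKernel γ q z) θ| ≤
        b * (z * (1 + γ * z) ^ q + z ^ 2 * (1 + γ * z) ^ (q - 1)) := by
  refine ⟨2 * κ ^ 3 * κ ^ |q| + γ * |q| * κ ^ 4 * κ ^ |q - 1|, by positivity, fun θ hθ z hz ↦ ?_⟩
  refine (abs_deriv_scaleKernel_le q hγ hκ hθ hz).trans ?_
  apply mul_add_mul_le_add_mul_add <;> positivity

end ScaleKernel

section Domination

variable {γ κ θ z : ℝ}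

theorem norm_gfun_le (r : ℝ) (hγ : 0 ≤ γ) (hκ : 1 ≤ κ) (hθ : θ ∈ Set.Icc κ⁻¹ κ) (hz : 0 ≤ z) :
    ‖gfun r γ θ z‖ ≤ κ ^ |r / γ| *
      (log (1 + γ * z) + (1 + γ * z) ^ (r / γ) + (γ + log κ + |1 / (1 - r)|)) := by
  have hθ₀ := pos_of_mem_Icc_inv hκ hθ
  have hγz : 0 ≤ γ * z := by positivity
  have hfactor : 1 ≤ κ ^ |r / γ| := one_le_rpow hκ (abs_nonneg _)
  have hconst : 0 ≤ log (1 + γ * z) + (γ + log κ + |1 / (1 - r)|) := by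
    have hlogκ := log_nonneg hκ
    have hlogγz := log_nonneg (le_add_of_nonneg_right hγz)
    positivity
  have hlog : |log (1 + γ * z / θ) - γ| ≤ log κ + log (1 + γ * z) + γ := by
    have hnonneg : 0 ≤ log (1 + γ * z / θ) := log_nonneg (le_add_of_nonneg_right (by positivity))
    have hupper := log_one_add_div_le hκ hθ hγz
    rw [abs_le]
    constructor <;> linarith
  have hpow : |(1 + γ * z / θ) ^ (r / γ) - 1 / (1 - r)| ≤
      κ ^ |r / γ| * (1 + γ * z) ^ (r / γ) + |1 / (1 - r)| := by
    refine (abs_sub _ _).trans (add_le_add_left ?_ _)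
    rw [abs_of_nonneg (by positivity)]
    exact one_add_div_rpow_le hκ hθ hγz _
  calc ‖gfun r γ θ z‖
    _ ≤ |log (1 + γ * z / θ) - γ| + |(1 + γ * z / θ) ^ (r / γ) - 1 / (1 - r)| :=
      norm_vec_two_le_add _ _
    _ ≤ κ ^ |r / γ| * (1 + γ * z) ^ (r / γ)
        + 1 * (log (1 + γ * z) + (γ + log κ + |1 / (1 - r)|)) := by linarith
    _ ≤ κ ^ |r / γ| * (1 + γ * z) ^ (r / γ)
        + κ ^ |r / γ| * (log (1 + γ * z) + (γ + log κ + |1 / (1 - r)|)) := by gcongr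
    _ = _ := by ring

theorem dgfun_eq_scaleKernel (r γ θ z : ℝ) :
    dgfun r γ θ z = ![-γ * scaleKernel γ (-1) z θ, -r * scaleKernel γ (r / γ - 1) z θ] := by
  simp only [dgfun, scaleKernel, Real.rpow_neg_one]
  congr 1
  · ring
  · congr 1
    ring

theorem deriv_dgfun (r : ℝ) (hθ : θ ≠ 0) (hbase : 1 + γ * z / θ ≠ 0) :
    deriv (fun t ↦ dgfun r γ t z) θ =
      ![-γ * deriv (scaleKernel γ (-1) z) θ, -r * deriv (scaleKernel γ (r / γ - 1) z) θ] := by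
  have hdiff (q : ℝ) : HasDerivAt (scaleKernel γ q z) (deriv (scaleKernel γ q z) θ) θ :=
    (hasDerivAt_scaleKernel q hθ hbase).differentiableAt.hasDerivAt
  refine HasDerivAt.deriv (hasDerivAt_pi.2 fun i ↦ ?_)
  simp only [dgfun_eq_scaleKernel]
  fin_cases i
  · exact (hdiff (-1)).const_mul (-γ)
  · exact (hdiff (r / γ - 1)).const_mul (-r)

theorem exists_norm_dgfun_le (r : ℝ) (hγ : 0 < γ) (hκ : 1 ≤ κ) :
    ∃ c > 0, ∀ θ ∈ Set.Icc κ⁻¹ κ, ∀ z, 0 ≤ z →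
      ‖dgfun r γ θ z‖ ≤ c * (z * (1 + γ * z)⁻¹ + z * (1 + γ * z) ^ (r / γ - 1)) := by
  refine ⟨γ * (κ ^ 2 * κ ^ |(-1 : ℝ)|) + |r| * (κ ^ 2 * κ ^ |r / γ - 1|), by positivity,
    fun θ hθ z hz ↦ ?_⟩
  calc ‖dgfun r γ θ z‖
    _ ≤ γ * |scaleKernel γ (-1) z θ| + |r| * |scaleKernel γ (r / γ - 1) z θ| := by
      rw [dgfun_eq_scaleKernel]
      exact (norm_vec_two_le_add _ _).trans_eq (by simp [abs_of_pos hγ])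
    _ ≤ γ * (κ ^ 2 * κ ^ |(-1 : ℝ)| * (z * (1 + γ * z) ^ (-1 : ℝ)))
        + |r| * (κ ^ 2 * κ ^ |r / γ - 1| * (z * (1 + γ * z) ^ (r / γ - 1))) := by
      gcongr <;> exact abs_scaleKernel_le _ hγ.le hκ hθ hz
    _ ≤ _ := by
      rw [Real.rpow_neg_one, ← mul_assoc γ, ← mul_assoc |r|]
      apply mul_add_mul_le_add_mul_add <;> positivity

theorem exists_norm_deriv_dgfun_le (r : ℝ) (hγ : 0 < γ) (hκ : 1 ≤ κ) :
    ∃ c > 0, ∀ θ ∈ Set.Icc κ⁻¹ κ, ∀ z, 0 ≤ z →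
      ‖deriv (fun t ↦ dgfun r γ t z) θ‖ ≤
        c * (z * (1 + γ * z)⁻¹ + z * (1 + γ * z) ^ (r / γ - 1) +
          z ^ 2 * ((1 + γ * z) ^ 2)⁻¹ + z ^ 2 * (1 + γ * z) ^ (r / γ - 2)) := by
  obtain ⟨b₁, hb₁, hkernel₁⟩ := exists_abs_deriv_scaleKernel_le (-1) hγ.le hκ
  obtain ⟨b₂, hb₂, hkernel₂⟩ := exists_abs_deriv_scaleKernel_le (r / γ - 1) hγ.le hκ
  have hγb₁ : 0 < γ * b₁ := mul_pos hγ hb₁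
  have hrb₂ : 0 ≤ |r| * b₂ := mul_nonneg (abs_nonneg r) hb₂.le
  refine ⟨γ * b₁ + |r| * b₂, add_pos_of_pos_of_nonneg hγb₁ hrb₂, fun θ hθ z hz ↦ ?_⟩
  have hpow_neg_two : (1 + γ * z) ^ (-1 - 1 : ℝ) = ((1 + γ * z) ^ 2)⁻¹ := by
    norm_num [Real.rpow_neg (by positivity : 0 ≤ 1 + γ * z)]
  calc ‖deriv (fun t ↦ dgfun r γ t z) θ‖
    _ ≤ γ * |deriv (scaleKernel γ (-1) z) θ| + |r| * |deriv (scaleKernel γ (r / γ - 1) z) θ| := by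
      have hθ₀ := pos_of_mem_Icc_inv hκ hθ
      rw [deriv_dgfun r hθ₀.ne' (by positivity)]
      exact (norm_vec_two_le_add _ _).trans_eq (by simp [abs_of_pos hγ])
    _ ≤ γ * (b₁ * (z * (1 + γ * z) ^ (-1 : ℝ) + z ^ 2 * (1 + γ * z) ^ (-1 - 1 : ℝ)))
        + |r| * (b₂ * (z * (1 + γ * z) ^ (r / γ - 1)
          + z ^ 2 * (1 + γ * z) ^ (r / γ - 1 - 1))) := by
      gcongr
      exacts [hkernel₁ θ hθ z hz, hkernel₂ θ hθ z hz]
    _ ≤ (γ * b₁ + |r| * b₂) *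
        (z * (1 + γ * z) ^ (-1 : ℝ) + z ^ 2 * (1 + γ * z) ^ (-1 - 1 : ℝ)
          + (z * (1 + γ * z) ^ (r / γ - 1) + z ^ 2 * (1 + γ * z) ^ (r / γ - 1 - 1))) := by
      rw [← mul_assoc γ, ← mul_assoc |r|]
      exact mul_add_mul_le_add_mul_add hγb₁.le hrb₂ (by positivity) (by positivity)
    _ = _ := by
      rw [Real.rpow_neg_one, hpow_neg_two, show r / γ - 1 - 1 = r / γ - 2 by ring]
      ring

end Domination

theorem g0_dominated_near_one_general (γ r κ : ℝ) (hγ : 0 < γ) (_hr : r ≠ 1) (hκ : 1 ≤ κ) :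
    ∃ c₁ c₁' c₂ c₃ : ℝ, 0 < c₁ ∧ 0 < c₁' ∧ 0 < c₂ ∧ 0 < c₃ ∧
      ∀ θ ∈ Set.Icc κ⁻¹ κ, ∀ z : ℝ, 0 ≤ z →
        ‖gfun r γ θ z‖ ^ 3 ≤
          c₁ * (log (1 + γ * z) + (1 + γ * z) ^ (r / γ) + c₁') ^ 3 ∧
        ‖dgfun r γ θ z‖ ≤
          c₂ * (z * (1 + γ * z)⁻¹ + z * (1 + γ * z) ^ (r / γ - 1)) ∧
        ‖deriv (fun t ↦ dgfun r γ t z) θ‖ ≤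
          c₃ * (z * (1 + γ * z)⁻¹ + z * (1 + γ * z) ^ (r / γ - 1) +
            z ^ 2 * ((1 + γ * z) ^ 2)⁻¹ + z ^ 2 * (1 + γ * z) ^ (r / γ - 2)) := by
  obtain ⟨c₂, hc₂, hdgfun⟩ := exists_norm_dgfun_le r hγ hκ
  obtain ⟨c₃, hc₃, hderiv⟩ := exists_norm_deriv_dgfun_le r hγ hκ
  have hlogκ := log_nonneg hκ
  refine ⟨(κ ^ |r / γ|) ^ 3, γ + log κ + |1 / (1 - r)|, c₂, c₃, by positivity, by positivity,
    hc₂, hc₃, fun θ hθ z hz ↦ ⟨?_, hdgfun θ hθ z hz, hderiv θ hθ z hz⟩⟩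
  rw [← mul_pow]
  exact pow_le_pow_left₀ (norm_nonneg _) (norm_gfun_le r hγ.le hκ hθ hz) 3

/-- Lemma 2 (parts 1–3): domination of `g₀`, `∂g₀/∂θ` and `∂²g₀/∂θ²` on a neighborhood
of `θ₀ = 1`, uniformly in `z ≥ 0`. -/
theorem g0_dominated_near_one (γ r : ℝ) (hγ : 0 < γ) (hr : r < 1 / 3) :
    ∃ c₁ c₁' c₂ c₃ : ℝ, 0 < c₁ ∧ 0 < c₁' ∧ 0 < c₂ ∧ 0 < c₃ ∧
      ∃ δ > (0:ℝ), ∀ θ : ℝ, |θ - 1| < δ → ∀ z : ℝ, 0 ≤ z →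
        ‖gfun r γ θ z‖ ^ 3 ≤
          c₁ * (Real.log (1 + γ * z) + (1 + γ * z) ^ (r / γ) + c₁') ^ 3 ∧
        ‖dgfun r γ θ z‖ ≤
          c₂ * (z * (1 + γ * z)⁻¹ + z * (1 + γ * z) ^ (r / γ - 1)) ∧
        ‖deriv (fun t => dgfun r γ t z) θ‖ ≤
          c₃ * (z * (1 + γ * z)⁻¹ + z * (1 + γ * z) ^ (r / γ - 1) +
            z ^ 2 * ((1 + γ * z) ^ 2)⁻¹ + z ^ 2 * (1 + γ * z) ^ (r / γ - 2)) := by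
  obtain ⟨c₁, c₁', c₂, c₃, hc₁, hc₁', hc₂, hc₃, hdom⟩ :=
    g0_dominated_near_one_general γ r 2 hγ (by linarith) one_le_two
  refine ⟨c₁, c₁', c₂, c₃, hc₁, hc₁', hc₂, hc₃, 1 / 2, by norm_num, fun θ hθ ↦ hdom θ ?_⟩
  constructor <;> linarith [abs_lt.1 hθ]
end
end
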